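/- Let (Ω, 𝓕) be a measurable space, 𝓖 a sub-σ-algebra of 𝓕, and A: Ω × ℝ → ℝ a function such that ω ↦ A(ω, y) is 𝓖-measurable for every y ∈ ℝ and y ↦ A(ω, y) is continuous for every ω ∈ Ω. Assume that for every ω ∈ Ω and every nonempty bounded subset C of ℝ, the set {y ∈ ℝ : A(ω, y) ∈ C} is nonempty and bounded. Then there exists a 𝓖 ⊗ 𝓑(ℝ)-measurable function B: Ω × ℝ → ℝ such that A(ω, B(ω, x)) = x for all (ω, x) ∈ Ω × ℝ. -/

import Mathlib

/-!
The right inverse is `B (ω, x) = min {y | A ω y = x}`. The minimum exists because the level set is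
nonempty, bounded and closed. For measurability, `B (ω, x) ≤ c` holds iff `A ω` takes the value `x`
on `(-∞, c]`. By `exists_le_eq_iff` this is equivalent to `A ω` taking values arbitrarily close
to `x` at rational points below `c`, which is a countable condition on sets that are measurable
since each `A · q` is.
-/

open MeasureTheory

noncomputable section

/-- Solvability of `f y = x` on `(-∞, c]` is detected by approximate solutions at rational points.
Properness of `f` enters by keeping the approximate solutions in a compact set. -/
lemma exists_le_eq_iff {f : ℝ → ℝ} (hf : Continuous f)
    (hbdd : ∀ C : Set ℝ, C.Nonempty → Bornology.IsBounded C → Bornology.IsBounded (f ⁻¹' C))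
    (x c : ℝ) :
    (∃ y ≤ c, f y = x) ↔ ∀ n : ℕ, ∃ q : ℚ, (q : ℝ) < c ∧ |f q - x| < 1 / ((n : ℝ) + 1) := by
  constructor
  · rintro ⟨y, hyc, hy⟩ n
    have hopen : IsOpen {z : ℝ | |f z - x| < 1 / ((n : ℝ) + 1)} :=
      isOpen_lt (by fun_prop) continuous_const
    have hmem : y ∈ {z : ℝ | |f z - x| < 1 / ((n : ℝ) + 1)} := by
      simp only [Set.mem_setOf_eq, hy, sub_self, abs_zero]
      positivity
    obtain ⟨l, hl, hsub⟩ := exists_Ioc_subset_of_mem_nhds (hopen.mem_nhds hmem) ⟨y - 1, by simp⟩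
    obtain ⟨q, hlq, hqy⟩ := exists_rat_btwn hl
    exact ⟨q, hqy.trans_le hyc, hsub ⟨hlq, hqy.le⟩⟩
  · intro h
    have hKc : IsCompact (f ⁻¹' Set.Icc (x - 1) (x + 1) ∩ Set.Iic c) := by
      refine Metric.isCompact_of_isClosed_isBounded
        ((isClosed_Icc.preimage hf).inter isClosed_Iic) (Bornology.IsBounded.subset ?_
          Set.inter_subset_left)
      exact hbdd _ ⟨x, by simp⟩ (Metric.isBounded_Icc _ _)
    have hK : ∀ n : ℕ, ∃ q ∈ f ⁻¹' Set.Icc (x - 1) (x + 1) ∩ Set.Iic c,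
        |f q - x| < 1 / ((n : ℝ) + 1) := by
      intro n
      obtain ⟨q, hqc, hq⟩ := h n
      have hle : 1 / ((n : ℝ) + 1) ≤ 1 := by
        rw [div_le_one (by positivity)]
        linarith [(Nat.cast_nonneg n : (0 : ℝ) ≤ n)]
      have hq' := abs_lt.1 (hq.trans_le hle)
      exact ⟨q, ⟨⟨by linarith, by linarith⟩, hqc.le⟩, hq⟩
    obtain ⟨q₀, hq₀, -⟩ := hK 0
    obtain ⟨y, hy, hmin⟩ := hKc.exists_isMinOn ⟨q₀, hq₀⟩
      (f := fun z => |f z - x|) (by fun_prop)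
    refine ⟨y, hy.2, ?_⟩
    by_contra hne
    obtain ⟨n, hn⟩ := exists_nat_one_div_lt (abs_pos.2 (sub_ne_zero.2 hne))
    obtain ⟨q, hqK, hq⟩ := hK n
    have hyq : |f y - x| ≤ |f q - x| := hmin hqK
    linarith

lemma exists_measurable_right_inverse {Ω : Type*} [MeasurableSpace Ω] (A : Ω → ℝ → ℝ)
    (hAmeas : ∀ y : ℝ, Measurable fun ω => A ω y)
    (hAcont : ∀ ω, Continuous (A ω))
    (hAproper : ∀ ω, ∀ C : Set ℝ, C.Nonempty → Bornology.IsBounded C →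
      {y : ℝ | A ω y ∈ C}.Nonempty ∧ Bornology.IsBounded {y : ℝ | A ω y ∈ C}) :
    ∃ B : Ω × ℝ → ℝ, Measurable B ∧ ∀ ω x, A ω (B (ω, x)) = x := by
  have hleast : ∀ p : Ω × ℝ, ∃ y, IsLeast {y | A p.1 y = p.2} y := by
    rintro ⟨ω, x⟩
    obtain ⟨hne, hb⟩ := hAproper ω {x} (Set.singleton_nonempty x) Bornology.isBounded_singleton
    have hcl : IsClosed {y | A ω y = x} := isClosed_eq (hAcont ω) continuous_const
    exact (Metric.isCompact_of_isClosed_isBounded hcl hb).exists_isLeast hne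
  choose B hB using hleast
  refine ⟨B, measurable_of_Iic fun c => ?_, fun ω x => (hB (ω, x)).1⟩
  have heq : B ⁻¹' Set.Iic c = ⋂ n : ℕ, ⋃ q : ℚ,
      {p : Ω × ℝ | (q : ℝ) < c ∧ |A p.1 q - p.2| < 1 / ((n : ℝ) + 1)} := by
    ext p
    have h := exists_le_eq_iff (hAcont p.1) (fun C hC hb => (hAproper p.1 C hC hb).2) p.2 c
    simp only [Set.mem_preimage, Set.mem_Iic, Set.mem_iInter, Set.mem_iUnion, Set.mem_setOf_eq]
    rw [← h]
    exact ⟨fun hp => ⟨B p, hp, (hB p).1⟩, fun ⟨y, hyc, hy⟩ => ((hB p).2 hy).trans hyc⟩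
  rw [heq]
  refine MeasurableSet.iInter fun n => MeasurableSet.iUnion fun q => ?_
  have hm : Measurable fun p : Ω × ℝ => |A p.1 q - p.2| :=
    (((hAmeas q).comp measurable_fst).sub measurable_snd).abs
  exact (MeasurableSet.const _).inter (measurableSet_lt hm measurable_const)

/-- **Lemma A.1** (Cheridito–Stadje): let `𝓖` be a sub-σ-algebra of `𝓕` and
`A : Ω × ℝ → ℝ` a function that is `𝓖`-measurable in `ω` and continuous in `y`.
If for every `ω` the preimage under `A(ω, ·)` of every nonempty bounded subset
of `ℝ` is nonempty and bounded, then there is a `𝓖 ⊗ 𝓑(ℝ)`-measurable function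
`B : Ω × ℝ → ℝ` with `A(ω, B(ω, x)) = x` for all `(ω, x)`. -/
theorem measurable_right_inverse_of_proper
    {Ω : Type} {F : MeasurableSpace Ω} (G : MeasurableSpace Ω) (hG : G ≤ F)
    (A : Ω → ℝ → ℝ)
    (hAmeas : ∀ y : ℝ, Measurable[G] fun ω => A ω y)
    (hAcont : ∀ ω, Continuous (A ω))
    (hAproper : ∀ ω, ∀ C : Set ℝ, C.Nonempty → Bornology.IsBounded C →
      {y : ℝ | A ω y ∈ C}.Nonempty ∧ Bornology.IsBounded {y : ℝ | A ω y ∈ C}) :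
    ∃ B : Ω × ℝ → ℝ,
      Measurable[G.prod (borel ℝ)] B ∧ ∀ ω x, A ω (B (ω, x)) = x := by
  exact @exists_measurable_right_inverse Ω G A hAmeas hAcont hAproper
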